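/- For every element $w \in F_2$, there exists $g \in F_2$ such that for every automorphism $\varphi$ of $F_2$, the cyclic reduction of $\varphi(w)$ does not contain $g$ as a subword. Explicitly, if $|w| = l$, one may take $g = a^{l+2} b^{l+2}$. -/

import Mathlib

open FreeGroup List

abbrev F2 := FreeGroup (Fin 2)

/-- The generator `a` of `F₂`. -/
def ga : F2 := FreeGroup.of 0

/-- The generator `b` of `F₂`. -/
def gb : F2 := FreeGroup.of 1

/-- `v` contains a block `x^{±k}`: `k` consecutive occurrences of the letter `x`
with the same sign, as a contiguous subword of the reduced word of `v`.
Thus "every `x`-exponent of `v` has absolute value `≤ n`" is `¬ HasBlock x (n+1) v`. -/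
def HasBlock (x : Fin 2) (k : ℕ) (v : F2) : Prop :=
  (List.replicate k (x, true)) <:+: v.toWord ∨ (List.replicate k (x, false)) <:+: v.toWord

/-- A reduced word is cyclically reduced if its last letter is not
the inverse of its first letter. -/
def CyclicallyReduced (l : List (Fin 2 × Bool)) : Prop :=
  ∀ p ∈ l.head?, ∀ q ∈ l.getLast?, q ≠ (p.1, !p.2)

/-- `(x, y)` is a basis of `F₂`: the image of `(a, b)` under an automorphism. -/
def IsBasis (x y : F2) : Prop := ∃ φ : F2 ≃* F2, φ ga = x ∧ φ gb = y

/-!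
Nielsen's descent: if a pair generating a free group of rank two has minimal total length in its
class under Nielsen moves and simultaneous conjugation, then it is Nielsen reduced, so it consists
of two letters up to sign. Running the moves backwards, every generating pair is, up to simultaneous
conjugation and inversion of its entries, obtained from two letters by positive moves alone. Some
letter `e` then never occurs twice in a row in either entry of the conjugated pair.

Counting adjacent occurrences of `e^{±1}` is subadditive under multiplication up to an error of `1`,
so the image of a word `w` has at most `|w|` of them up to a bounded conjugation error. Passing to
powers removes that error for the cyclically reduced conjugate, which therefore contains neither
`e ^ (|w| + 2)` nor its inverse, whereas `a ^ (|w| + 2) * b ^ (|w| + 2)` contains this power of both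
generators.
-/

section CommonPrefix

variable {α : Type*} [DecidableEq α]

/-- The length of the longest common prefix of two lists. -/
def commonPrefixLength : List α → List α → ℕ
  | x :: s, y :: t => if x = y then commonPrefixLength s t + 1 else 0
  | _, _ => 0

lemma commonPrefixLength_comm (s t : List α) :
    commonPrefixLength s t = commonPrefixLength t s := by
  induction s generalizing t with
  | nil => cases t <;> simp [commonPrefixLength]
  | cons x s ih => cases t <;> simp [commonPrefixLength, ih, eq_comm]

lemma min_commonPrefixLength_le (s t u : List α) :
    min (commonPrefixLength s t) (commonPrefixLength t u) ≤ commonPrefixLength s u := by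
  induction s generalizing t u with
  | nil => simp [commonPrefixLength]
  | cons x s ih =>
    cases t with
    | nil => simp [commonPrefixLength]
    | cons y t =>
      cases u with
      | nil => simp [commonPrefixLength]
      | cons z u =>
        have := ih t u
        simp only [commonPrefixLength]
        split_ifs <;> first | omega | simp_all

lemma exists_append_of_commonPrefixLength (s t : List α) :
    ∃ p s' t', s = p ++ s' ∧ t = p ++ t' ∧ p.length = commonPrefixLength s t ∧
      ∀ x ∈ s'.head?, ∀ y ∈ t'.head?, x ≠ y := by
  induction s generalizing t with
  | nil => exact ⟨[], [], t, by simp [commonPrefixLength]⟩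
  | cons x s ih =>
    cases t with
    | nil => exact ⟨[], x :: s, [], by simp [commonPrefixLength]⟩
    | cons y t =>
      by_cases h : x = y
      · subst h
        obtain ⟨p, s', t', rfl, rfl, hp, hne⟩ := ih t
        exact ⟨x :: p, s', t', rfl, rfl, by simp [commonPrefixLength, hp], hne⟩
      · exact ⟨[], x :: s, y :: t, rfl, rfl, by simp [commonPrefixLength, h], by simpa⟩

end CommonPrefix

section Cancellation

variable {α : Type*}

lemma isReduced_invRev {L : List (α × Bool)} (hL : IsReduced L) : IsReduced (invRev L) := by
  classical exact .of_reduce_eq (by rw [reduce_invRev, hL.reduce_eq])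

lemma isReduced_invRev_append {s t : List (α × Bool)} (hs : IsReduced s) (ht : IsReduced t)
    (hne : ∀ x ∈ s.head?, ∀ y ∈ t.head?, x ≠ y) : IsReduced (invRev s ++ t) := by
  refine List.isChain_append.2 ⟨isReduced_invRev hs, ht, fun x hx y hy hxy => ?_⟩
  simp only [invRev, List.getLast?_reverse, List.head?_map, Option.mem_def,
    Option.map_eq_some_iff] at hx
  obtain ⟨z, hz, rfl⟩ := hx
  exact (Bool.eq_not.2 fun h => hne z hz y hy (Prod.ext hxy h.symm)).symm

variable [DecidableEq α]

/-- The length of the longest common prefix of the reduced words of `u` and `v`, i.e. the number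
of letters of `v` cancelled in the product `u⁻¹ * v`. This is the Gromov product of `u` and `v` in
the Cayley tree. -/
def cancellation (u v : FreeGroup α) : ℕ := commonPrefixLength u.toWord v.toWord

lemma cancellation_comm (u v : FreeGroup α) : cancellation u v = cancellation v u :=
  commonPrefixLength_comm _ _

lemma min_cancellation_le (u v w : FreeGroup α) :
    min (cancellation u v) (cancellation v w) ≤ cancellation u w :=
  min_commonPrefixLength_le _ _ _

lemma cancellation_eq_of_lt {u v w : FreeGroup α} (h : cancellation v w < cancellation v u) :
    cancellation u w = cancellation v w := by
  have h₁ := min_cancellation_le u v w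
  have h₂ := min_cancellation_le v u w
  rw [cancellation_comm u v] at h₁
  omega

lemma exists_append_toWord_inv_mul (u v : FreeGroup α) :
    ∃ p s t, u.toWord = p ++ s ∧ v.toWord = p ++ t ∧ p.length = cancellation u v ∧
      (u⁻¹ * v).toWord = invRev s ++ t := by
  obtain ⟨p, s, t, hu, hv, hp, hne⟩ := exists_append_of_commonPrefixLength u.toWord v.toWord
  have hs : IsReduced s := (isReduced_toWord (x := u)).infix (hu ▸ (List.suffix_append p s).isInfix)
  have ht : IsReduced t := (isReduced_toWord (x := v)).infix (hv ▸ (List.suffix_append p t).isInfix)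
  have hmul : u⁻¹ * v = mk (invRev s ++ t) := by
    rw [← mk_toWord (x := u), ← mk_toWord (x := v), hu, hv, ← mul_mk, ← mul_mk, ← mul_mk,
      ← inv_mk]
    group
  exact ⟨p, s, t, hu, hv, hp,
    by rw [hmul, toWord_mk, (isReduced_invRev_append hs ht hne).reduce_eq]⟩

lemma norm_inv_mul_add_cancellation (u v : FreeGroup α) :
    norm (u⁻¹ * v) + 2 * cancellation u v = norm u + norm v := by
  obtain ⟨p, s, t, hu, hv, hp, huv⟩ := exists_append_toWord_inv_mul u v
  simp only [FreeGroup.norm, huv, hu, hv, List.length_append, invRev_length]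
  omega

lemma cancellation_inv_mul (u v : FreeGroup α) :
    cancellation u⁻¹ (u⁻¹ * v) + cancellation u v = norm u := by
  have h₁ := norm_inv_mul_add_cancellation u v
  have h₂ := norm_inv_mul_add_cancellation u⁻¹ (u⁻¹ * v)
  rw [inv_inv, mul_inv_cancel_left, norm_inv_eq] at h₂
  omega

lemma norm_pow_succ (u : FreeGroup α) (n : ℕ) :
    norm (u ^ (n + 1)) = norm u + n * (reduceCyclically u.toWord).length := by
  have hpow := reduceCyclically.reduce_flatten_replicate_succ (isReduced_toWord (x := u)) n
  have hconj := reduceCyclically.conj_conjugator_reduceCyclically u.toWord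
  rw [FreeGroup.norm, FreeGroup.norm, toWord_pow, hpow, ← congrArg List.length hconj]
  simp only [List.length_append, List.length_flatten, List.map_replicate, List.sum_replicate,
    smul_eq_mul]
  ring

lemma reduceCyclically_toWord_ne_nil {u : FreeGroup α} (hu : u ≠ 1) :
    reduceCyclically u.toWord ≠ [] := by
  intro h
  have hconj := reduceCyclically.conj_conjugator_reduceCyclically u.toWord
  apply hu
  rw [← mk_toWord (x := u), ← hconj, h, List.append_nil, ← mul_mk, ← inv_mk, mul_inv_cancel]

lemma two_mul_cancellation_inv_lt {u : FreeGroup α} (hu : u ≠ 1) :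
    2 * cancellation u⁻¹ u < norm u := by
  have hsq := norm_inv_mul_add_cancellation u⁻¹ u
  have hpos := List.length_pos_iff.2 (reduceCyclically_toWord_ne_nil hu)
  rw [inv_inv, norm_inv_eq, ← pow_two, norm_pow_succ] at hsq
  omega

lemma exists_toWord_eq_append_of_cancellation_add_eq {x y : FreeGroup α}
    (h : cancellation x y + cancellation x⁻¹ y⁻¹ = norm y) (hle : norm y ≤ norm x) :
    ∃ s r t, x.toWord = s ++ r ++ t ∧ y.toWord = s ++ t := by
  obtain ⟨s, x₁, t, hx, hy, hs, -⟩ := exists_append_toWord_inv_mul x y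
  obtain ⟨t', x₂, y₂, hx', hy', ht', -⟩ := exists_append_toWord_inv_mul x⁻¹ y⁻¹
  rw [toWord_inv] at hx' hy'
  simp only [FreeGroup.norm, hx, hy, List.length_append] at h hle
  rw [hy, invRev_append] at hy'
  obtain ⟨rfl, -⟩ := List.append_inj hy' (by rw [invRev_length]; omega)
  have ht : t <:+ x.toWord :=
    ⟨invRev x₂, invRev_injective (by rw [invRev_append, invRev_invRev, hx'])⟩
  obtain ⟨r, rfl⟩ : t <:+ x₁ :=
    List.suffix_of_suffix_length_le ht (hx ▸ List.suffix_append s x₁) (by omega)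
  exact ⟨s, r, t, by rw [hx, List.append_assoc], hy⟩

end Cancellation

section NielsenReduced

variable {ι α G : Type*} [Group G]

/-- The image of the letter `p` under the homomorphism sending the generator `i` to `f i`. -/
def letterValue (f : ι → G) (p : ι × Bool) : G := FreeGroup.lift f (FreeGroup.mk [p])

@[simp]
lemma letterValue_true (f : ι → G) (i : ι) : letterValue f (i, true) = f i := by
  simp [letterValue]

@[simp]
lemma letterValue_false (f : ι → G) (i : ι) : letterValue f (i, false) = (f i)⁻¹ := by
  simp [letterValue]

lemma letterValue_not (f : ι → G) (i : ι) (b : Bool) :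
    letterValue f (i, !b) = (letterValue f (i, b))⁻¹ := by
  cases b <;> simp

lemma lift_mk_append_singleton (f : ι → G) (L : List (ι × Bool)) (p : ι × Bool) :
    FreeGroup.lift f (FreeGroup.mk (L ++ [p])) =
      FreeGroup.lift f (FreeGroup.mk L) * letterValue f p := by
  rw [← mul_mk, _root_.map_mul, letterValue]

variable [DecidableEq α]

/-- Nielsen reduced families in a free group: in the image of a reduced word, the cancellations
of a factor with its two neighbours do not exhaust that factor. -/
def IsNielsenReduced (f : ι → FreeGroup α) : Prop :=
  ∀ p q r : ι × Bool, IsReduced [p, q, r] →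
    cancellation (letterValue f p)⁻¹ (letterValue f q) +
      cancellation (letterValue f q)⁻¹ (letterValue f r) < norm (letterValue f q)

namespace IsNielsenReduced

variable {f : ι → FreeGroup α}

lemma cancellation_lift (hf : IsNielsenReduced f) (L : List (ι × Bool)) (q r : ι × Bool)
    (hL : IsReduced (L ++ [q, r])) :
    cancellation (FreeGroup.lift f (FreeGroup.mk (L ++ [q])))⁻¹ (letterValue f r) =
        cancellation (letterValue f q)⁻¹ (letterValue f r) ∧
      cancellation (letterValue f q)⁻¹ (letterValue f r) + (L.length + 1) ≤
        norm (FreeGroup.lift f (FreeGroup.mk (L ++ [q]))) := by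
  induction L using List.reverseRecOn generalizing q r with
  | nil =>
    have hqqr := hf q q r (by simpa using hL)
    rw [List.nil_append, List.length_nil, ← letterValue]
    exact ⟨rfl, by omega⟩
  | append_singleton L k ih =>
    obtain ⟨hcancel, hnorm⟩ := ih k q (hL.infix ⟨[], [r], by simp⟩)
    have hkqr := hf k q r (hL.infix ⟨L, [], by simp⟩)
    rw [lift_mk_append_singleton, List.length_append, List.length_singleton]
    set g := FreeGroup.lift f (FreeGroup.mk (L ++ [k]))
    set v := letterValue f q
    have hsplit : cancellation v⁻¹ (g * v)⁻¹ + cancellation g⁻¹ v = norm v := by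
      rw [mul_inv_rev, cancellation_comm g⁻¹, cancellation_inv_mul]
    have hmul : norm (g * v) + 2 * cancellation g⁻¹ v = norm g + norm v := by
      simpa using norm_inv_mul_add_cancellation g⁻¹ v
    exact ⟨cancellation_eq_of_lt (by omega), by omega⟩

lemma norm_le_norm_lift [DecidableEq ι] (hf : IsNielsenReduced f) (w : FreeGroup ι) :
    norm w ≤ norm (FreeGroup.lift f w) := by
  have hw := isReduced_toWord (x := w)
  rcases List.eq_nil_or_concat' w.toWord with h | ⟨L, q, h⟩
  · simp [FreeGroup.norm, h]
  · rw [h] at hw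
    have hqq : IsReduced (L ++ [q, q]) := by
      simpa using hw.append_overlap (L₂ := [q]) (L₃ := [q]) (by simp) (by simp)
    have hnorm := (hf.cancellation_lift L q q hqq).2
    rw [← h, mk_toWord] at hnorm
    rw [FreeGroup.norm, h, List.length_append, List.length_singleton]
    omega

lemma exists_letterValue_eq (hf : IsNielsenReduced f) {w : FreeGroup ι}
    (hw : norm (FreeGroup.lift f w) = 1) : ∃ p, FreeGroup.lift f w = letterValue f p := by
  classical
  have hne : w ≠ 1 := by
    rintro rfl
    simp at hw
  have hlen : w.toWord.length = 1 :=
    le_antisymm (hw ▸ hf.norm_le_norm_lift w)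
      (List.length_pos_iff.2 (toWord_eq_nil_iff.not.2 hne))
  obtain ⟨p, hp⟩ := List.length_eq_one_iff.1 hlen
  exact ⟨p, by rw [letterValue, ← hp, mk_toWord]⟩

lemma exists_perm_eq_mk_singleton [Finite α] {f : α → FreeGroup α} (hf : IsNielsenReduced f)
    (hsurj : Function.Surjective (FreeGroup.lift f)) :
    ∃ σ : Equiv.Perm α, ∀ i, ∃ b, f i = FreeGroup.mk [(σ i, b)] := by
  have hletter (i : α) : ∃ j b, f j = FreeGroup.mk [(i, b)] := by
    obtain ⟨w, hw⟩ := hsurj (FreeGroup.of i)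
    obtain ⟨⟨j, b⟩, hj⟩ := hf.exists_letterValue_eq (hw ▸ norm_of i)
    rw [hw] at hj
    cases b with
    | true => exact ⟨j, true, by rw [← letterValue_true f, ← hj]; rfl⟩
    | false => exact ⟨j, false, by rw [← inv_inv (f j), ← letterValue_false f, ← hj]; rfl⟩
  choose j b hj using hletter
  have hinj : Function.Injective j := fun i i' h => by
    have := congrArg FreeGroup.toWord ((hj i).symm.trans (h ▸ hj i'))
    simpa using (Prod.ext_iff.1 (List.singleton_inj.1 this)).1
  refine ⟨(Equiv.ofBijective j (Finite.injective_iff_bijective.1 hinj)).symm, fun i => ?_⟩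
  obtain ⟨i, rfl⟩ := (Finite.injective_iff_surjective.1 hinj) i
  exact ⟨b i, by rw [Equiv.ofBijective_symm_apply_apply, hj]⟩

end IsNielsenReduced

end NielsenReduced

section NielsenEquiv

variable {G : Type*} [Group G]

/-- Nielsen equivalence up to conjugation: `(u, v)` is obtained from `(x, y)` by elementary Nielsen
moves and simultaneous conjugations. The conjugations preserve generation and allow a shorter
descent than the moves alone. -/
inductive NielsenEquiv (x y : G) : G → G → Prop
  | refl : NielsenEquiv x y x y
  | swap {u v : G} : NielsenEquiv x y u v → NielsenEquiv x y v u
  | inv {u v : G} : NielsenEquiv x y u v → NielsenEquiv x y u⁻¹ v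
  | mul {u v : G} : NielsenEquiv x y u v → NielsenEquiv x y (u * v) v
  | conj (g : G) {u v : G} : NielsenEquiv x y u v → NielsenEquiv x y (g * u * g⁻¹) (g * v * g⁻¹)

lemma closure_pair_eq_top_of_mem {x y u v : G} (h : Subgroup.closure {x, y} = ⊤)
    (hx : x ∈ Subgroup.closure {u, v}) (hy : y ∈ Subgroup.closure {u, v}) :
    Subgroup.closure {u, v} = ⊤ := by
  rw [eq_top_iff, ← h, Subgroup.closure_le, Set.pair_subset_iff]
  exact ⟨hx, hy⟩

lemma closure_image_pair_eq_top {H : Type*} [Group H] {φ : G →* H} (hφ : Function.Surjective φ)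
    {x y : G} (h : Subgroup.closure {x, y} = ⊤) : Subgroup.closure {φ x, φ y} = ⊤ := by
  rw [← Set.image_pair, ← MonoidHom.map_closure, h, Subgroup.map_top_of_surjective φ hφ]

lemma ne_one_of_closure_pair_eq_top {x y a b : G} (h : Subgroup.closure {x, y} = ⊤)
    (hab : a * b ≠ b * a) : x ≠ 1 := by
  rintro rfl
  have hmem (z : G) : z ∈ Subgroup.zpowers y := by
    rw [Subgroup.zpowers_eq_closure, ← Subgroup.closure_insert_one, h]
    exact Subgroup.mem_top z
  obtain ⟨m, rfl⟩ := Subgroup.mem_zpowers_iff.1 (hmem a)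
  obtain ⟨n, rfl⟩ := Subgroup.mem_zpowers_iff.1 (hmem b)
  exact hab (zpow_mul_comm y m n)

namespace NielsenEquiv

variable {x y u v : G}

lemma inv_mul (h : NielsenEquiv x y u v) : NielsenEquiv x y u (u⁻¹ * v) := by
  simpa using h.swap.inv.mul.inv.swap

lemma mul_inv (h : NielsenEquiv x y u v) : NielsenEquiv x y (u * v⁻¹) v := by
  simpa using h.swap.inv.swap.mul.swap.inv.swap

lemma trans {u' v' : G} (h : NielsenEquiv x y u v) (h' : NielsenEquiv u v u' v') :
    NielsenEquiv x y u' v' := by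
  induction h' with
  | refl => exact h
  | swap _ ih => exact ih.swap
  | inv _ ih => exact ih.inv
  | mul _ ih => exact ih.mul
  | conj g _ ih => exact ih.conj g

lemma symm (h : NielsenEquiv x y u v) : NielsenEquiv u v x y := by
  induction h with
  | refl => exact refl
  | swap _ ih => exact refl.swap.trans ih
  | @inv u v _ ih => exact .trans (by simpa using (refl (x := u⁻¹) (y := v)).inv) ih
  | @mul u v _ ih => exact .trans (by simpa using (refl (x := u * v) (y := v)).mul_inv) ih
  | @conj g u v _ ih =>
    refine .trans ?_ ih
    simpa [mul_assoc] using (refl (x := g * u * g⁻¹) (y := g * v * g⁻¹)).conj g⁻¹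

lemma closure_eq_top (h : NielsenEquiv x y u v) (hxy : Subgroup.closure {x, y} = ⊤) :
    Subgroup.closure {u, v} = ⊤ := by
  have left_mem (a b : G) : a ∈ Subgroup.closure {a, b} := Subgroup.subset_closure (by simp)
  have right_mem (a b : G) : b ∈ Subgroup.closure {a, b} := Subgroup.subset_closure (by simp)
  induction h with
  | refl => exact hxy
  | swap _ ih => rwa [Set.pair_comm]
  | @inv u v _ ih =>
    exact closure_pair_eq_top_of_mem ih (inv_mem_iff.1 (left_mem u⁻¹ v)) (right_mem _ _)
  | @mul u v _ ih =>
    exact closure_pair_eq_top_of_mem ih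
      ((Subgroup.mul_mem_cancel_right _ (right_mem (u * v) v)).1 (left_mem _ _)) (right_mem _ _)
  | conj g _ ih =>
    exact closure_image_pair_eq_top (φ := (MulAut.conj g).toMonoidHom) (MulAut.conj g).surjective ih

end NielsenEquiv

end NielsenEquiv

section NielsenMinimal

variable {α : Type*} [DecidableEq α] {x y : FreeGroup α}

/-- The pair `(x, y)` has the smallest total length among all pairs obtained from it by Nielsen
moves and simultaneous conjugations. -/
def IsNielsenMinimal (x y : FreeGroup α) : Prop :=
  ∀ u v, NielsenEquiv x y u v → norm x + norm y ≤ norm u + norm v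

lemma exists_nielsenEquiv_isNielsenMinimal (x y : FreeGroup α) :
    ∃ u v, NielsenEquiv x y u v ∧ IsNielsenMinimal u v := by
  obtain ⟨⟨u, v⟩, huv, hmin⟩ :=
    exists_minimalFor_of_wellFoundedLT
      (fun p : FreeGroup α × FreeGroup α => NielsenEquiv x y p.1 p.2)
      (fun p => norm p.1 + norm p.2) ⟨(x, y), .refl⟩
  exact ⟨u, v, huv, fun u' v' h =>
    (le_total _ _).elim id (hmin (j := (u', v')) (huv.trans h))⟩

namespace IsNielsenMinimal

lemma swap (h : IsNielsenMinimal x y) : IsNielsenMinimal y x := fun u v huv => by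
  rw [add_comm]
  exact h u v (NielsenEquiv.refl.swap.trans huv)

lemma inv (h : IsNielsenMinimal x y) : IsNielsenMinimal x⁻¹ y := fun u v huv => by
  rw [norm_inv_eq]
  exact h u v (NielsenEquiv.refl.inv.trans huv)

lemma inv_right (h : IsNielsenMinimal x y) : IsNielsenMinimal x y⁻¹ :=
  h.swap.inv.swap

lemma two_mul_cancellation_le_left (h : IsNielsenMinimal x y) :
    2 * cancellation x y ≤ norm x := by
  have hmin := h _ _ NielsenEquiv.refl.inv_mul
  have hnorm := norm_inv_mul_add_cancellation x y
  omega

lemma two_mul_cancellation_le_right (h : IsNielsenMinimal x y) :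
    2 * cancellation x y ≤ norm y := by
  rw [cancellation_comm]
  exact h.swap.two_mul_cancellation_le_left

-- In the equality case `y = s * t` and `x = s * r * t`, so `(x * y⁻¹, y)` is conjugate by `s` to
-- the shorter pair `(r, t * s)`.
lemma cancellation_add_cancellation_inv_lt (h : IsNielsenMinimal x y) (hy : y ≠ 1) :
    cancellation x y + cancellation x⁻¹ y⁻¹ < norm y := by
  have h₁ := h.two_mul_cancellation_le_left
  have h₂ := h.two_mul_cancellation_le_right
  have h₁' := h.inv.inv_right.two_mul_cancellation_le_left
  have h₂' := h.inv.inv_right.two_mul_cancellation_le_right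
  rw [norm_inv_eq] at h₁' h₂'
  by_contra! hge
  obtain ⟨s, r, t, hx, hy'⟩ :=
    exists_toWord_eq_append_of_cancellation_add_eq (x := x) (y := y) (by omega) (by omega)
  have hequiv : NielsenEquiv x y (FreeGroup.mk r) (FreeGroup.mk (t ++ s)) := by
    have := (NielsenEquiv.refl (x := x) (y := y)).mul_inv.conj (FreeGroup.mk s)⁻¹
    rw [← mk_toWord (x := x), ← mk_toWord (x := y), hx, hy'] at this ⊢
    simpa only [← mul_mk, _root_.mul_inv_rev, inv_inv, mul_assoc, inv_mul_cancel_left,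
      mul_inv_cancel_left, inv_mul_cancel, mul_one] using this
  have hmin := h _ _ hequiv
  have hr := norm_mk_le (L₁ := r)
  have hts := norm_mk_le (L₁ := t ++ s)
  have hpos : norm y ≠ 0 := norm_eq_zero.not.2 hy
  simp only [FreeGroup.norm, hx, hy', List.length_append] at hmin hr hts hpos
  omega

lemma cancellation_add_cancellation_inv_left_lt (h : IsNielsenMinimal x y) (hy : y ≠ 1) :
    cancellation x y + cancellation y⁻¹ x < norm y := by
  have h₁ := h.two_mul_cancellation_le_right
  have h₂ := h.inv_right.two_mul_cancellation_le_right
  have hself := two_mul_cancellation_inv_lt hy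
  have htri := min_cancellation_le y⁻¹ x y
  rw [norm_inv_eq, cancellation_comm] at h₂
  omega

lemma letterValue_pair (h : IsNielsenMinimal x y) {p q : Fin 2 × Bool} (hpq : p.1 ≠ q.1) :
    IsNielsenMinimal (letterValue ![x, y] p) (letterValue ![x, y] q) := by
  obtain ⟨i, b⟩ := p
  obtain ⟨j, c⟩ := q
  have hij : IsNielsenMinimal (![x, y] i) (![x, y] j) := by
    fin_cases i <;> fin_cases j
    exacts [absurd rfl hpq, h, h.swap, absurd rfl hpq]
  cases b <;> cases c <;> simp only [letterValue_true, letterValue_false]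
  exacts [hij.inv.inv_right, hij.inv, hij.inv_right, hij]

lemma cancellation_add_cancellation_lt_of_fst_ne (h : IsNielsenMinimal x y)
    {p q r : Fin 2 × Bool} (hp : p.1 ≠ q.1) (hr : r.1 ≠ q.1)
    (hq : letterValue ![x, y] q ≠ 1) :
    cancellation (letterValue ![x, y] p)⁻¹ (letterValue ![x, y] q) +
      cancellation (letterValue ![x, y] q)⁻¹ (letterValue ![x, y] r) <
        norm (letterValue ![x, y] q) := by
  have hpq := (h.letterValue_pair hp).inv
  obtain ⟨i, b⟩ := p
  obtain ⟨i', c⟩ := r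
  obtain rfl : i' = i := by grind
  rcases Bool.eq_or_eq_not c b with rfl | rfl
  · rw [cancellation_comm _⁻¹ (letterValue _ (i', c))]
    simpa using hpq.cancellation_add_cancellation_inv_lt hq
  · rw [letterValue_not]
    exact hpq.cancellation_add_cancellation_inv_left_lt hq

lemma isNielsenReduced (h : IsNielsenMinimal x y) (hx : x ≠ 1) (hy : y ≠ 1) :
    IsNielsenReduced ![x, y] := by
  rintro p q r hpqr
  simp only [isReduced_cons_cons] at hpqr
  obtain ⟨hpq, hqr, -⟩ := hpqr
  have hq : letterValue ![x, y] q ≠ 1 := by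
    obtain ⟨i, b⟩ := q
    fin_cases i <;> cases b <;> simpa
  have hself := two_mul_cancellation_inv_lt hq
  by_cases hp : p.1 = q.1 <;> by_cases hr : r.1 = q.1
  · obtain rfl : p = q := Prod.ext hp (hpq hp)
    obtain rfl : r = p := Prod.ext hr (hqr hr.symm).symm
    omega
  · obtain rfl : p = q := Prod.ext hp (hpq hp)
    have hright := (h.letterValue_pair (Ne.symm hr)).inv.two_mul_cancellation_le_left
    rw [norm_inv_eq] at hright
    omega
  · obtain rfl : r = q := Prod.ext hr (hqr hr.symm).symm
    have hleft := (h.letterValue_pair hp).inv.two_mul_cancellation_le_right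
    omega
  · exact h.cancellation_add_cancellation_lt_of_fst_ne hp hr hq

end IsNielsenMinimal

end NielsenMinimal

section AdjacentCount

variable {α : Type*} [DecidableEq α]

/-- The number of pairs of adjacent letters of `L` both of which are `e` or `e⁻¹`. -/
def adjacentCount (e : α) : List (α × Bool) → ℕ
  | x :: y :: t => (if x.1 = e ∧ y.1 = e then 1 else 0) + adjacentCount e (y :: t)
  | _ => 0

variable (e : α)

lemma adjacentCount_add_le_append (L M : List (α × Bool)) :
    adjacentCount e L + adjacentCount e M ≤ adjacentCount e (L ++ M) := by
  induction L with
  | nil => simp [adjacentCount]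
  | cons x L ih =>
    cases L with
    | nil => cases M <;> simp [adjacentCount]
    | cons y L =>
      simp only [List.cons_append, adjacentCount] at ih ⊢
      omega

lemma adjacentCount_append_le (L M : List (α × Bool)) :
    adjacentCount e (L ++ M) ≤ adjacentCount e L + adjacentCount e M + 1 := by
  induction L with
  | nil => simp [adjacentCount]
  | cons x L ih =>
    cases L with
    | nil =>
      cases M with
      | nil => simp [adjacentCount]
      | cons y M =>
        simp only [List.cons_append, List.nil_append, adjacentCount]
        split_ifs <;> omega
    | cons y L =>
      simp only [List.cons_append, adjacentCount] at ih ⊢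
      omega

lemma adjacentCount_append_pair (L : List (α × Bool)) (x y : α × Bool) :
    adjacentCount e (L ++ [x, y]) =
      adjacentCount e (L ++ [x]) + if x.1 = e ∧ y.1 = e then 1 else 0 := by
  induction L with
  | nil => simp [adjacentCount]
  | cons z L ih => cases L <;> simp_all [adjacentCount, add_assoc]

lemma adjacentCount_invRev (L : List (α × Bool)) :
    adjacentCount e (invRev L) = adjacentCount e L := by
  induction L with
  | nil => simp
  | cons x L ih =>
    cases L with
    | nil => simp [invRev, adjacentCount]
    | cons y L =>
      have hxy : invRev (x :: y :: L) = invRev L ++ [(y.1, !y.2), (x.1, !x.2)] := by simp [invRev]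
      have hy : invRev (y :: L) = invRev L ++ [(y.1, !y.2)] := by simp [invRev]
      rw [hxy, adjacentCount_append_pair, ← hy, ih, adjacentCount, add_comm]
      simp only [and_comm]

lemma adjacentCount_le_of_infix {L M : List (α × Bool)} (h : L <:+: M) :
    adjacentCount e L ≤ adjacentCount e M := by
  obtain ⟨s, t, rfl⟩ := h
  have hsL := adjacentCount_add_le_append e s L
  have hsLt := adjacentCount_add_le_append e (s ++ L) t
  omega

lemma adjacentCount_replicate_succ (b : Bool) (n : ℕ) :
    adjacentCount e (List.replicate (n + 1) (e, b)) = n := by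
  induction n with
  | zero => rfl
  | succ n ih =>
    rw [List.replicate_succ] at ih
    rw [List.replicate_succ, List.replicate_succ, adjacentCount, ih, if_pos ⟨rfl, rfl⟩, add_comm]

lemma mul_adjacentCount_le_flatten_replicate (L : List (α × Bool)) (n : ℕ) :
    n * adjacentCount e L ≤ adjacentCount e (List.replicate n L).flatten := by
  induction n with
  | zero => simp
  | succ n ih =>
    have := adjacentCount_add_le_append e L (List.replicate n L).flatten
    rw [List.replicate_succ, List.flatten_cons, Nat.succ_mul]
    omega

lemma adjacentCount_toWord_inv (u : FreeGroup α) :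
    adjacentCount e u⁻¹.toWord = adjacentCount e u.toWord := by
  rw [toWord_inv, adjacentCount_invRev]

lemma adjacentCount_toWord_mul_le (u v : FreeGroup α) :
    adjacentCount e (u * v).toWord ≤ adjacentCount e u.toWord + adjacentCount e v.toWord + 1 := by
  obtain ⟨p, s, t, hu, hv, -, huv⟩ := exists_append_toWord_inv_mul u⁻¹ v
  rw [inv_inv] at huv
  have hst := adjacentCount_append_le e (invRev s) t
  have hps := adjacentCount_add_le_append e p s
  have hpt := adjacentCount_add_le_append e p t
  rw [adjacentCount_invRev] at hst
  rw [huv, hv, ← adjacentCount_toWord_inv, hu]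
  omega

lemma adjacentCount_conj_le (h u : FreeGroup α) :
    adjacentCount e (h * u * h⁻¹).toWord ≤
      adjacentCount e u.toWord + (2 * adjacentCount e h.toWord + 2) := by
  have hleft := adjacentCount_toWord_mul_le e h u
  have hright := adjacentCount_toWord_mul_le e (h * u) h⁻¹
  rw [adjacentCount_toWord_inv] at hright
  omega

variable {e} {ι : Type*} {f : ι → FreeGroup α}

lemma adjacentCount_lift_mk_le (hf : ∀ i, adjacentCount e (f i).toWord = 0)
    (L : List (ι × Bool)) :
    adjacentCount e (FreeGroup.lift f (FreeGroup.mk L)).toWord ≤ L.length := by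
  induction L using List.reverseRecOn with
  | nil => simp [← one_eq_mk, adjacentCount]
  | append_singleton L p ih =>
    have hp : adjacentCount e (letterValue f p).toWord = 0 := by
      obtain ⟨i, b⟩ := p
      cases b <;> simp [adjacentCount_invRev, hf]
    have hmul := adjacentCount_toWord_mul_le e (FreeGroup.lift f (FreeGroup.mk L)) (letterValue f p)
    rw [lift_mk_append_singleton, List.length_append, List.length_singleton]
    omega

-- `adjacentCount e` is superadditive on words and subadditive up to `1` on group elements, so
-- comparing high powers of both sides of `hw` removes the conjugation and the additive defects.
lemma adjacentCount_le_norm_of_lift_eq_conj [DecidableEq ι]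
    (hf : ∀ i, adjacentCount e (f i).toWord = 0) {w : FreeGroup ι} {c h : FreeGroup α}
    (hw : FreeGroup.lift f w = h * c * h⁻¹) (hc : IsCyclicallyReduced c.toWord) :
    adjacentCount e c.toWord ≤ norm w := by
  set K := 2 * adjacentCount e h.toWord + 2
  have hpow (n : ℕ) : n * adjacentCount e c.toWord ≤ n * norm w + K := by
    have hconj : c ^ n = h⁻¹ * FreeGroup.lift f (w ^ n) * h⁻¹⁻¹ := by
      rw [map_pow, hw, conj_pow]
      group
    calc n * adjacentCount e c.toWord
        ≤ adjacentCount e (List.replicate n c.toWord).flatten :=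
          mul_adjacentCount_le_flatten_replicate e c.toWord n
      _ = adjacentCount e (c ^ n).toWord := by
          rw [FreeGroup.toWord_pow, (hc.flatten_replicate n).isReduced.reduce_eq]
      _ ≤ adjacentCount e (FreeGroup.lift f (w ^ n)).toWord + K := by
          rw [hconj]
          simpa only [adjacentCount_toWord_inv] using
            adjacentCount_conj_le e h⁻¹ (FreeGroup.lift f (w ^ n))
      _ ≤ n * norm w + K := by
          gcongr
          rw [← mk_toWord (x := w), pow_mk]
          simpa [FreeGroup.norm] using
            adjacentCount_lift_mk_le hf (List.replicate n w.toWord).flatten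
  by_contra! hlt
  nlinarith [hpow (K + 1)]

end AdjacentCount

section PositivePairs

variable {α : Type*}

/-- The pairs obtained from a pair of independent letters by positive Nielsen moves, i.e. by
multiplying one entry by the other, without inversions. -/
inductive PositivePair : FreeGroup α → FreeGroup α → Prop
  | letters (p q : α × Bool) (h : p.1 ≠ q.1) :
      PositivePair (FreeGroup.mk [p]) (FreeGroup.mk [q])
  | mul_left {x y : FreeGroup α} : PositivePair x y → PositivePair (x * y) y
  | mul_right {x y : FreeGroup α} : PositivePair x y → PositivePair x (y * x)

/-- The pair `(x, y)` is, up to simultaneous conjugation and inversion of either entry, a positive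
pair. -/
def IsConjPositive (x y : FreeGroup α) : Prop :=
  ∃ k u v : FreeGroup α, PositivePair u v ∧
    (k * x * k⁻¹ = u ∨ k * x * k⁻¹ = u⁻¹) ∧ (k * y * k⁻¹ = v ∨ k * y * k⁻¹ = v⁻¹)

variable {x y : FreeGroup α}

lemma PositivePair.swap (h : PositivePair x y) : PositivePair y x := by
  induction h with
  | letters p q h => exact .letters q p h.symm
  | mul_left _ ih => exact ih.mul_right
  | mul_right _ ih => exact ih.mul_left

lemma PositivePair.isConjPositive (h : PositivePair x y) : IsConjPositive x y :=
  ⟨1, x, y, h, by simp, by simp⟩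

namespace IsConjPositive

lemma swap (h : IsConjPositive x y) : IsConjPositive y x := by
  obtain ⟨k, u, v, huv, hx, hy⟩ := h
  exact ⟨k, v, u, huv.swap, hy, hx⟩

lemma inv (h : IsConjPositive x y) : IsConjPositive x⁻¹ y := by
  obtain ⟨k, u, v, huv, hx, hy⟩ := h
  refine ⟨k, u, v, huv, ?_, hy⟩
  rw [← conj_inv, inv_inj, inv_eq_iff_eq_inv]
  exact hx.symm

lemma inv_right (h : IsConjPositive x y) : IsConjPositive x y⁻¹ :=
  h.swap.inv.swap

lemma of_conj (g : FreeGroup α) (h : IsConjPositive (g * x * g⁻¹) (g * y * g⁻¹)) :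
    IsConjPositive x y := by
  obtain ⟨k, u, v, huv, hx, hy⟩ := h
  refine ⟨k * g, u, v, huv, ?_, ?_⟩
  · simpa [mul_assoc] using hx
  · simpa [mul_assoc] using hy

lemma conj (g : FreeGroup α) (h : IsConjPositive x y) :
    IsConjPositive (g * x * g⁻¹) (g * y * g⁻¹) :=
  of_conj g⁻¹ (by simpa [mul_assoc] using h)

end IsConjPositive

-- Multiplying by `y⁻¹` on the right either undoes the last move or, when the last move was
-- `y = z * x`, gives `x * y⁻¹ = z⁻¹`.
lemma PositivePair.isConjPositive_mul_inv (h : PositivePair x y) :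
    IsConjPositive (x * y⁻¹) y := by
  cases h with
  | letters p q h =>
    simpa [invRev] using
      (PositivePair.letters p (q.1, !q.2) h).mul_left.isConjPositive.inv_right
  | mul_left h => simpa using h.isConjPositive
  | @mul_right _ z h =>
    refine .of_conj z⁻¹ ?_
    simpa [mul_assoc] using h.mul_left.swap.isConjPositive.inv

lemma IsConjPositive.mul (h : IsConjPositive x y) : IsConjPositive (x * y) y := by
  obtain ⟨k, u, v, huv, hx, hy⟩ := h
  refine of_conj k ?_
  rw [← conj_mul]
  rcases hx with hx | hx <;> rcases hy with hy | hy <;> rw [hx, hy]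
  · exact huv.mul_left.isConjPositive
  · exact huv.isConjPositive_mul_inv.inv_right
  · refine of_conj v ?_
    simpa [mul_assoc] using huv.isConjPositive_mul_inv.inv
  · refine of_conj v⁻¹ ?_
    simpa [mul_assoc] using huv.mul_left.isConjPositive.inv.inv_right

lemma NielsenEquiv.isConjPositive {u v : FreeGroup α} (h : NielsenEquiv x y u v)
    (hxy : IsConjPositive x y) : IsConjPositive u v := by
  induction h with
  | refl => exact hxy
  | swap _ ih => exact ih.swap
  | inv _ ih => exact ih.inv
  | mul _ ih => exact ih.mul
  | conj g _ ih => exact ih.conj g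

lemma PositivePair.eq_mk_singleton_or_mem_closure (h : PositivePair x y) :
    (∃ p q : α × Bool, p.1 ≠ q.1 ∧ x = FreeGroup.mk [p] ∧ y = FreeGroup.mk [q]) ∨
      ∃ p q : α × Bool, p.1 ≠ q.1 ∧
        x ∈ Submonoid.closure {FreeGroup.mk [p, q], FreeGroup.mk [q]} ∧
        y ∈ Submonoid.closure {FreeGroup.mk [p, q], FreeGroup.mk [q]} := by
  have mem_closure (p q : α × Bool) :
      FreeGroup.mk [p, q] ∈ Submonoid.closure {FreeGroup.mk [p, q], FreeGroup.mk [q]} ∧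
        FreeGroup.mk [q] ∈ Submonoid.closure {FreeGroup.mk [p, q], FreeGroup.mk [q]} :=
    ⟨Submonoid.subset_closure (by simp), Submonoid.subset_closure (by simp)⟩
  induction h with
  | letters p q h => exact .inl ⟨p, q, h, rfl, rfl⟩
  | mul_left _ ih =>
    rcases ih with ⟨p, q, hpq, rfl, rfl⟩ | ⟨p, q, hpq, hx, hy⟩
    · exact .inr ⟨p, q, hpq, by simpa using mem_closure p q⟩
    · exact .inr ⟨p, q, hpq, mul_mem hx hy, hy⟩
  | mul_right _ ih =>
    rcases ih with ⟨p, q, hpq, rfl, rfl⟩ | ⟨p, q, hpq, hx, hy⟩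
    · exact .inr ⟨q, p, hpq.symm, by simpa using (mem_closure q p).symm⟩
    · exact .inr ⟨p, q, hpq, hx, mul_mem hy hx⟩

variable [DecidableEq α]

lemma adjacentCount_eq_zero_of_mem_closure {p q : α × Bool} (hpq : p.1 ≠ q.1) {z : FreeGroup α}
    (hz : z ∈ Submonoid.closure {FreeGroup.mk [p, q], FreeGroup.mk [q]}) :
    adjacentCount p.1 z.toWord = 0 := by
  suffices ∃ L, z = FreeGroup.mk L ∧ (∀ r ∈ L, r = p ∨ r = q) ∧ adjacentCount p.1 L = 0 by
    obtain ⟨L, rfl, hL, hcount⟩ := this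
    have hred : IsReduced L := by
      refine (List.pairwise_of_forall_mem_list fun r hr s hs hrs => ?_).isChain
      rcases hL r hr with rfl | rfl <;> rcases hL s hs with rfl | rfl <;> simp_all
    rwa [toWord_mk, hred.reduce_eq]
  have cons_q (L) (hL : adjacentCount p.1 L = 0) : adjacentCount p.1 (q :: L) = 0 := by
    cases L <;> simp [adjacentCount, hpq.symm, hL]
  induction hz using Submonoid.closure_induction_left with
  | one => exact ⟨[], rfl, by simp, rfl⟩
  | mul_left s hs z _ ih =>
    obtain ⟨L, rfl, hL, hcount⟩ := ih
    rcases hs with rfl | rfl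
    · exact ⟨p :: q :: L, by simp, by simpa using hL,
        by simp [adjacentCount, hpq.symm, cons_q L hcount]⟩
    · exact ⟨q :: L, by simp, by simpa using hL, cons_q L hcount⟩

lemma PositivePair.exists_adjacentCount_eq_zero (h : PositivePair x y) :
    ∃ e, adjacentCount e x.toWord = 0 ∧ adjacentCount e y.toWord = 0 := by
  rcases h.eq_mk_singleton_or_mem_closure with ⟨p, q, -, rfl, rfl⟩ | ⟨p, q, hpq, hx, hy⟩
  · exact ⟨p.1, rfl, rfl⟩
  · exact ⟨p.1, adjacentCount_eq_zero_of_mem_closure hpq hx,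
      adjacentCount_eq_zero_of_mem_closure hpq hy⟩

lemma IsConjPositive.exists_conj_adjacentCount_eq_zero (h : IsConjPositive x y) :
    ∃ k e, adjacentCount e (k * x * k⁻¹).toWord = 0 ∧
      adjacentCount e (k * y * k⁻¹).toWord = 0 := by
  obtain ⟨k, u, v, huv, hx, hy⟩ := h
  obtain ⟨e, hu, hv⟩ := huv.exists_adjacentCount_eq_zero
  refine ⟨k, e, ?_, ?_⟩
  · rcases hx with hx | hx <;> simp only [hx, adjacentCount_toWord_inv, hu]
  · rcases hy with hy | hy <;> simp only [hy, adjacentCount_toWord_inv, hv]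

end PositivePairs

section RankTwo

lemma isConjPositive_of_isNielsenMinimal {u v : F2} (hmin : IsNielsenMinimal u v)
    (huv : Subgroup.closure {u, v} = ⊤) : IsConjPositive u v := by
  have hcomm : ga * gb ≠ gb * ga := by decide
  have hu : u ≠ 1 := ne_one_of_closure_pair_eq_top huv hcomm
  have hv : v ≠ 1 := ne_one_of_closure_pair_eq_top (Set.pair_comm u v ▸ huv) hcomm
  have hsurj : Function.Surjective (FreeGroup.lift ![u, v]) := by
    rw [lift_surjective_iff_closure_range_eq_top, Matrix.range_cons_cons_empty, huv]
  obtain ⟨σ, hσ⟩ := (hmin.isNielsenReduced hu hv).exists_perm_eq_mk_singleton hsurj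
  obtain ⟨b, rfl : u = _⟩ := hσ 0
  obtain ⟨c, rfl : v = _⟩ := hσ 1
  exact (PositivePair.letters _ _ (σ.injective.ne zero_ne_one)).isConjPositive

lemma isConjPositive_of_closure_pair_eq_top {x y : F2} (h : Subgroup.closure {x, y} = ⊤) :
    IsConjPositive x y := by
  obtain ⟨u, v, huv, hmin⟩ := exists_nielsenEquiv_isNielsenMinimal x y
  exact huv.symm.isConjPositive (isConjPositive_of_isNielsenMinimal hmin (huv.closure_eq_top h))

lemma closure_ga_gb_eq_top : Subgroup.closure {ga, gb} = ⊤ := by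
  rw [← FreeGroup.closure_range_of]
  congr 1
  ext x
  simp [ga, gb, eq_comm]

lemma HasBlock.le_adjacentCount {x : Fin 2} {n : ℕ} {v : F2} (h : HasBlock x (n + 1) v) :
    n ≤ adjacentCount x v.toWord := by
  rcases h with h | h <;> simpa only [adjacentCount_replicate_succ] using
    adjacentCount_le_of_infix x h

lemma CyclicallyReduced.isCyclicallyReduced {c : F2} (hc : CyclicallyReduced c.toWord) :
    IsCyclicallyReduced c.toWord :=
  ⟨isReduced_toWord, fun q hq p hp hqp =>
    (Bool.eq_not.not_left.1 fun h => hc p hp q hq (Prod.ext hqp h))⟩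

theorem exists_not_hasBlock {φ : F2 →* F2} (hφ : Function.Surjective φ) {w c h : F2}
    (hw : φ w = h * c * h⁻¹) (hc : CyclicallyReduced c.toWord) :
    ∃ x, ¬ HasBlock x (norm w + 2) c := by
  obtain ⟨k, e, ha, hb⟩ := (isConjPositive_of_closure_pair_eq_top
    (closure_image_pair_eq_top hφ closure_ga_gb_eq_top)).exists_conj_adjacentCount_eq_zero
  have hf (i : Fin 2) : adjacentCount e (k * φ (FreeGroup.of i) * k⁻¹).toWord = 0 := by
    fin_cases i
    exacts [ha, hb]
  have hlift : FreeGroup.lift (fun i => k * φ (FreeGroup.of i) * k⁻¹) =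
      (MulAut.conj k).toMonoidHom.comp φ := by
    ext i
    simp
  have hconj : FreeGroup.lift (fun i => k * φ (FreeGroup.of i) * k⁻¹) w =
      k * h * c * (k * h)⁻¹ := by
    rw [hlift, MonoidHom.comp_apply, hw]
    simp [mul_assoc]
  refine ⟨e, fun hblock => ?_⟩
  have hge := hblock.le_adjacentCount
  have hle := adjacentCount_le_norm_of_lift_eq_conj hf hconj hc.isCyclicallyReduced
  omega

lemma toWord_ga_pow_mul_gb_pow (m n : ℕ) :
    (ga ^ m * gb ^ n).toWord = List.replicate m (0, true) ++ List.replicate n (1, true) := by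
  rw [toWord_mul, ga, gb, toWord_of_pow, toWord_of_pow]
  refine IsReduced.reduce_eq (List.Pairwise.isChain ?_)
  refine List.pairwise_of_forall_mem_list fun r hr s hs _ => ?_
  simp only [List.mem_append, List.mem_replicate] at hr hs
  rcases hr with ⟨-, rfl⟩ | ⟨-, rfl⟩ <;> rcases hs with ⟨-, rfl⟩ | ⟨-, rfl⟩ <;> rfl

lemma hasBlock_of_infix {n : ℕ} {c : F2} (h : (ga ^ n * gb ^ n).toWord <:+: c.toWord) (x : Fin 2) :
    HasBlock x n c := by
  rw [toWord_ga_pow_mul_gb_pow] at h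
  refine .inl (List.IsInfix.trans ?_ h)
  fin_cases x
  exacts [(List.prefix_append _ _).isInfix, (List.suffix_append _ _).isInfix]

end RankTwo

/-- Orbit-blocking words exist: for every `w ∈ F₂` of length `l`, the word
`g = a^{l+2} b^{l+2}` is such that no cyclically reduced image of `w` under an
automorphism of `F₂` (equivalently, no cyclically reduced conjugate `c` of any
automorphic image) contains `g` as a subword. -/
theorem orbit_blocking_exists (w : F2) :
    ∃ g : F2, g = ga ^ (w.toWord.length + 2) * gb ^ (w.toWord.length + 2) ∧
      ∀ φ : F2 ≃* F2, ∀ c h : F2, φ w = h * c * h⁻¹ →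
        CyclicallyReduced c.toWord → ¬ g.toWord <:+: c.toWord := by
  refine ⟨_, rfl, fun φ c h hw hc hg => ?_⟩
  obtain ⟨x, hx⟩ := exists_not_hasBlock (φ := φ.toMonoidHom) φ.surjective hw hc
  exact hx (hasBlock_of_infix hg x)
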